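/- Let p > 1 and a = 0. Let f ≡ 0 and let g ∈ C¹(ℝ) satisfy g ≥ 0 on ℝ, g not identically zero, and ∫_{−1}^{1} g(y) dy > 0. Then there exist positive constants ε₀ = ε₀(g,p) and C = C(g,p) such that for every ε with 0 < ε ≤ ε₀ and every T > φ^{−1}(C·ε^{−(p−1)}), there is no function u ∈ C(ℝ×[0,T]) satisfying u(x,t) = (ε/2)∫_{x−t}^{x+t} g(y) dy + (1/2)∬_{D(x,t)} |u(y,s)|^p (1+y²)^{−1/2} dy ds for all (x,t) ∈ ℝ×[0,T]. In particular the lifespan satisfies T_ε ≤ φ^{−1}(C·ε^{−(p−1)}). -/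

import Mathlib

open MeasureTheory Real Set Filter

lemma aux_inner_cont (F : ℝ → ℝ → ℝ) (hF : Continuous (fun q : ℝ × ℝ => F q.1 q.2)) (x t : ℝ) :
    Continuous (fun s : ℝ => ∫ y in (x - t + s)..(x + t - s), F y s) := by
  have hc : Continuous (Function.uncurry (fun s y : ℝ => F y s)) :=
    hF.comp (continuous_snd.prodMk continuous_fst)
  have h1 : Continuous (fun s : ℝ => ∫ y in (0:ℝ)..(x + t - s), F y s) :=
    intervalIntegral.continuous_parametric_intervalIntegral_of_continuous hc (by fun_prop)
  have h2 : Continuous (fun s : ℝ => ∫ y in (0:ℝ)..(x - t + s), F y s) :=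
    intervalIntegral.continuous_parametric_intervalIntegral_of_continuous hc (by fun_prop)
  have hi : ∀ s a b, IntervalIntegrable (fun y => F y s) volume a b := fun s a b =>
    (hF.comp (continuous_id.prodMk continuous_const)).intervalIntegrable a b
  have : (fun s : ℝ => ∫ y in (x - t + s)..(x + t - s), F y s)
      = fun s => (∫ y in (0:ℝ)..(x + t - s), F y s) - ∫ y in (0:ℝ)..(x - t + s), F y s := by
    funext s
    rw [intervalIntegral.integral_interval_sub_left (hi _ _ _) (hi _ _ _)]
  rw [this]
  exact h1.sub h2

lemma aux_double (F : ℝ → ℝ → ℝ) (hF : Continuous (fun q : ℝ × ℝ => F q.1 q.2))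
    (hF0 : ∀ y s, 0 ≤ F y s) (x t a b R M : ℝ) (ha : 0 ≤ a) (hab : a ≤ b) (hbt : b ≤ t)
    (hR : 0 ≤ R) (hx1 : x - t + b ≤ 0) (hx2 : R ≤ x + t - b)
    (hM : ∀ s ∈ Icc a b, ∀ y ∈ Icc 0 R, M * (1 + y)⁻¹ ≤ F y s) :
    (b - a) * (M * Real.log (1 + R))
      ≤ ∫ s in (0:ℝ)..t, ∫ y in (x - t + s)..(x + t - s), F y s := by
  have hc := aux_inner_cont F hF x t
  have hi : ∀ s a b, IntervalIntegrable (fun y => F y s) volume a b := fun s a b =>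
    (hF.comp (continuous_id.prodMk continuous_const)).intervalIntegrable a b
  have hlog : ∫ y in (0:ℝ)..R, (1 + y)⁻¹ = Real.log (1 + R) := by
    rw [intervalIntegral.integral_comp_add_left (fun y => y⁻¹) 1, integral_inv_of_pos] <;>
      first | positivity | simp
  have hii : IntervalIntegrable (fun y : ℝ => M * (1 + y)⁻¹) volume 0 R := by
    apply ContinuousOn.intervalIntegrable
    rw [uIcc_of_le hR]
    apply ContinuousOn.mul continuousOn_const
    apply ContinuousOn.inv₀ (by fun_prop)
    intro y hy
    have := hy.1
    positivity
  have hin : ∀ s ∈ Icc a b, M * Real.log (1 + R) ≤ ∫ y in (x - t + s)..(x + t - s), F y s := by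
    intro s hs
    calc M * Real.log (1 + R) = ∫ y in (0:ℝ)..R, M * (1 + y)⁻¹ := by
          rw [intervalIntegral.integral_const_mul, hlog]
      _ ≤ ∫ y in (0:ℝ)..R, F y s :=
          intervalIntegral.integral_mono_on hR hii (hi _ _ _) (hM s hs)
      _ ≤ _ := intervalIntegral.integral_mono_interval (by linarith [hs.2]) hR
          (by linarith [hs.2]) (Eventually.of_forall fun y => hF0 y s) (hi _ _ _)
  calc (b - a) * (M * Real.log (1 + R)) = ∫ s in a..b, M * Real.log (1 + R) := by
        rw [intervalIntegral.integral_const, smul_eq_mul]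
    _ ≤ ∫ s in a..b, ∫ y in (x - t + s)..(x + t - s), F y s :=
        intervalIntegral.integral_mono_on hab (by simp) (hc.intervalIntegrable _ _) hin
    _ ≤ _ := by
        rw [intervalIntegral.integral_of_le hab,
          intervalIntegral.integral_of_le (ha.trans (hab.trans hbt))]
        apply setIntegral_mono_set
        · exact (hc.intervalIntegrable 0 t).1
        · filter_upwards [ae_restrict_mem measurableSet_Ioc] with s hs
          by_cases h : x - t + s ≤ x + t - s
          · exact intervalIntegral.integral_nonneg h (fun y _ => hF0 y s)
          · linarith [hs.2]
        · exact (Ioc_subset_Ioc ha hbt).eventuallyLE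

lemma aux_log (T : ℝ) (hT : 4 ≤ T) (k : ℕ) :
    (T * Real.log (2 + T) / 512) * (1 / 4) ^ k ≤
      (T / 2 ^ (k + 4)) * Real.log (1 + T / 2 ^ (k + 4)) := by
  have h2 : (1:ℝ) ≤ 2 ^ (k + 4) := one_le_pow₀ (by norm_num)
  have h1 : (1 / 2 ^ (k + 4)) * Real.log (1 + T) ≤ Real.log (1 + T / 2 ^ (k + 4)) := by
    have hb : (1 + T) ^ ((1:ℝ) / 2 ^ (k + 4)) ≤ 1 + (1 / 2 ^ (k + 4)) * T :=
      rpow_one_add_le_one_add_mul_self (by linarith) (by positivity)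
        (by rw [div_le_one (by positivity)]; exact h2)
    rw [← Real.log_rpow (by linarith)]
    apply Real.log_le_log (Real.rpow_pos_of_pos (by linarith) _)
    convert hb using 2
    ring
  have h3 : Real.log (2 + T) ≤ 2 * Real.log (1 + T) := by
    have : Real.log ((1 + T) ^ 2) = 2 * Real.log (1 + T) := by simp
    rw [← this]
    exact Real.log_le_log (by linarith) (by nlinarith)
  calc (T * Real.log (2 + T) / 512) * (1 / 4) ^ k
      ≤ (T * (2 * Real.log (1 + T)) / 512) * (1 / 4) ^ k := by gcongr
    _ = (T / 2 ^ (k + 4)) * ((1 / 2 ^ (k + 4)) * Real.log (1 + T)) := by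
        have : (1 / 4 : ℝ) ^ k = (1 / 2 ^ k) * (1 / 2 ^ k) := by
          rw [← one_div_pow, ← mul_pow]; norm_num
        rw [this, pow_add]
        ring
    _ ≤ _ := by gcongr

lemma aux_main (p : ℝ) (hp : 1 < p) (T w₀ l : ℝ) (hT : 4 ≤ T) (hw : 0 < w₀) (hl : 1 < l)
    (hl4 : 4 ≤ l ^ (p - 1))
    (hA : l ≤ (T * Real.log (2 + T) / 512) * w₀ ^ (p - 1))
    (u v : ℝ → ℝ → ℝ) (hv : Continuous (fun q : ℝ × ℝ => v q.1 q.2))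
    (huv : ∀ y, ∀ s ∈ Icc 0 T, v y s = u y s) (I : ℝ → ℝ → ℝ)
    (hI0 : ∀ x t, 0 ≤ t → 0 ≤ I x t)
    (hI : ∀ x t, t ≤ T → |x| ≤ T / 16 → T / 2 ≤ t → w₀ ≤ I x t)
    (h : ∀ x t : ℝ, t ∈ Set.Icc (0:ℝ) T → u x t = I x t
                + 1 / 2 * ∫ s in (0:ℝ)..t, ∫ y in (x - t + s)..(x + t - s),
                    |u y s| ^ p / (1 + y ^ 2) ^ ((1:ℝ) / 2)) : False := by
  set F : ℝ → ℝ → ℝ := fun y s => |v y s| ^ p / (1 + y ^ 2) ^ ((1:ℝ) / 2) with hFdef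
  have hF : Continuous (fun q : ℝ × ℝ => F q.1 q.2) := by
    apply Continuous.div
    · exact hv.abs.rpow_const (fun _ => Or.inr (by linarith))
    · exact Continuous.rpow_const (by fun_prop) (fun _ => Or.inr (by norm_num))
    · intro q
      positivity
  have hF0 : ∀ y s, 0 ≤ F y s := fun y s => by positivity
  have h' : ∀ x t : ℝ, t ∈ Set.Icc (0:ℝ) T → u x t = I x t
                + 1 / 2 * ∫ s in (0:ℝ)..t, ∫ y in (x - t + s)..(x + t - s), F y s := by
    intro x t ht
    rw [h x t ht]
    congr 2
    apply intervalIntegral.integral_congr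
    intro s hs
    rw [uIcc_of_le ht.1] at hs
    simp only [hFdef]
    apply intervalIntegral.integral_congr
    intro y _
    simp only
    rw [huv y s ⟨hs.1, hs.2.trans ht.2⟩]
  have hdn : ∀ x t, 0 ≤ t → 0 ≤ ∫ s in (0:ℝ)..t, ∫ y in (x - t + s)..(x + t - s), F y s := by
    intro x t ht
    apply intervalIntegral.integral_nonneg ht
    intro s hs
    exact intervalIntegral.integral_nonneg (by linarith [hs.2]) (fun y _ => hF0 y s)
  have key : ∀ k : ℕ, ∀ x t, |x| ≤ T / 2 ^ (k + 4) → T - T / 2 ^ (k + 1) ≤ t → t ≤ T →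
      w₀ * l ^ k ≤ u x t := by
    intro k
    induction k with
    | zero =>
      intro x t hx h1 h2
      norm_num at hx h1
      rw [h' x t ⟨by linarith, h2⟩]
      have := hdn x t (by linarith)
      have := hI x t h2 hx (by linarith)
      simp only [pow_zero]
      linarith
    | succ k ih =>
      intro x t hx h1 h2
      set R := T / 2 ^ (k + 4) with hR
      have hRpos : 0 < R := by positivity
      have e1 : T / 2 ^ (k + 1) = 8 * R := by rw [hR, pow_add, pow_add]; field_simp; norm_num
      have e2 : T / 2 ^ (k + 1 + 1) = 4 * R := by
        rw [hR, pow_add, pow_add, pow_add]; field_simp; norm_num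
      have e3 : T / 2 ^ (k + 1 + 4) = R / 2 := by
        rw [hR, pow_add, pow_add, pow_add]; field_simp
      have e4 : R ≤ T / 16 := by
        rw [hR, pow_add]
        apply div_le_div_of_nonneg_left (by linarith) (by norm_num)
        have : (1:ℝ) ≤ 2 ^ k := one_le_pow₀ (by norm_num)
        linarith
      rw [e1] at ih
      rw [e2] at h1
      rw [e3] at hx
      rw [abs_le] at hx
      have hd := aux_double F hF hF0 x t (T - 8 * R) (T - 6 * R) R ((w₀ * l ^ k) ^ p)
        (by linarith) (by linarith) (by linarith) hRpos.le (by linarith) (by linarith) (by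
          intro s hs y hy
          have hu := ih y s (by rw [abs_of_nonneg hy.1]; exact hy.2) hs.1 (by linarith [hs.2])
          simp only [hFdef]
          rw [huv y s ⟨by linarith [hs.1], by linarith [hs.2]⟩, div_eq_mul_inv]
          have hy0 := hy.1
          apply mul_le_mul
          · exact Real.rpow_le_rpow (by positivity) (hu.trans (le_abs_self _)) (by linarith)
          · apply inv_anti₀ (by positivity)
            rw [← Real.sqrt_eq_rpow]
            exact Real.sqrt_le_iff.2 ⟨by linarith, by nlinarith⟩
          · positivity
          · positivity)
      rw [h' x t ⟨by linarith, h2⟩]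
      have hi0 := hI0 x t (by linarith)
      have hlg := aux_log T hT k
      rw [← hR] at hlg
      have hpw : (w₀ * l ^ k) ^ p = (w₀ ^ (p - 1) * (l ^ (p - 1)) ^ k) * (w₀ * l ^ k) := by
        have : p = (p - 1) + 1 := by ring
        conv_lhs => rw [this]
        rw [Real.rpow_add (by positivity), Real.rpow_one,
          Real.mul_rpow hw.le (by positivity), ← Real.rpow_pow_comm (by linarith)]
      have h4 : (1:ℝ) ≤ (1 / 4) ^ k * (l ^ (p - 1)) ^ k := by
        rw [← mul_pow]
        exact one_le_pow₀ (by linarith)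
      have hfin : w₀ * l ^ (k + 1) ≤ (R * Real.log (1 + R)) * (w₀ * l ^ k) ^ p := by
        calc w₀ * l ^ (k + 1) = l * 1 * (w₀ * l ^ k) := by ring
          _ ≤ ((T * Real.log (2 + T) / 512) * w₀ ^ (p - 1)) * ((1 / 4) ^ k * (l ^ (p - 1)) ^ k)
              * (w₀ * l ^ k) := by
              have := (zero_lt_one.trans hl).le.trans hA
              gcongr
          _ = ((T * Real.log (2 + T) / 512) * (1 / 4) ^ k) * (w₀ * l ^ k) ^ p := by
              rw [hpw]; ring
          _ ≤ _ := by gcongr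
      linarith
  obtain ⟨n, hn⟩ := pow_unbounded_of_one_lt (u 0 T / w₀) hl
  have := key n 0 T (by simp; positivity) (by simp; positivity) le_rfl
  rw [div_lt_iff₀ hw] at hn
  linarith

theorem stmt_1 (p : ℝ) (hp : 1 < p)
    (g : ℝ → ℝ) (hg : ContDiff ℝ 1 g) (hgpos : ∀ x, 0 ≤ g x)
    (hgne : ∃ x, g x ≠ 0) (hgint : 0 < ∫ y in (-1:ℝ)..1, g y) :
    ∃ ε₀ > (0:ℝ), ∃ C > (0:ℝ), ∀ ε : ℝ, 0 < ε → ε ≤ ε₀ →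
      ∀ T : ℝ, 0 ≤ T → C * ε ^ (-(p - 1)) < T * Real.log (2 + T) →
        ¬ ∃ u : ℝ → ℝ → ℝ,
            ContinuousOn (fun q : ℝ × ℝ => u q.1 q.2) (Set.univ ×ˢ Set.Icc 0 T) ∧
            ∀ x t : ℝ, t ∈ Set.Icc (0:ℝ) T →
              u x t = ε / 2 * (∫ y in (x - t)..(x + t), g y)
                + 1 / 2 * ∫ s in (0:ℝ)..t, ∫ y in (x - t + s)..(x + t - s),
                    |u y s| ^ p / (1 + y ^ 2) ^ ((1:ℝ) / 2) := by
  set G := ∫ y in (-1:ℝ)..1, g y with hG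
  set l : ℝ := 4 ^ (1 / (p - 1)) with hl
  have hp1 : 0 < p - 1 := by linarith
  have hl1 : 1 < l := Real.one_lt_rpow (by norm_num) (by positivity)
  have hl4 : l ^ (p - 1) = 4 := by
    rw [hl, ← Real.rpow_mul (by norm_num), one_div, inv_mul_cancel₀ hp1.ne', Real.rpow_one]
  have hGp : 0 < (G / 2) ^ (p - 1) := Real.rpow_pos_of_pos (by linarith) _
  have hlog6 : 0 < Real.log (2 + 4) := Real.log_pos (by norm_num)
  refine ⟨1, one_pos, max (4 * Real.log (2 + 4)) (512 * l / (G / 2) ^ (p - 1)),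
    lt_max_of_lt_left (by positivity), ?_⟩
  rintro ε hε hε1 T hT0 hC ⟨u, hu, h⟩
  have hεp : 0 < ε ^ (p - 1) := Real.rpow_pos_of_pos hε _
  have hεp1 : ε ^ (p - 1) ≤ 1 := Real.rpow_le_one hε.le hε1 hp1.le
  rw [Real.rpow_neg hε.le, ← div_eq_mul_inv, div_lt_iff₀ hεp] at hC
  have hTl : 0 ≤ T * Real.log (2 + T) := mul_nonneg hT0 (Real.log_nonneg (by linarith))
  have hT : 4 ≤ T := by
    by_contra! hlt
    have h1 : T * Real.log (2 + T) ≤ 4 * Real.log (2 + 4) := by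
      have : Real.log (2 + T) ≤ Real.log (2 + 4) := Real.log_le_log (by linarith) (by linarith)
      exact mul_le_mul hlt.le this (Real.log_nonneg (by linarith)) (by norm_num)
    have h2 := le_max_left (4 * Real.log (2 + 4)) (512 * l / (G / 2) ^ (p - 1))
    have h3 := mul_le_of_le_one_right hTl hεp1
    exact absurd (hC.trans_le (h3.trans (h1.trans h2))) (lt_irrefl _)
  have hA : l ≤ (T * Real.log (2 + T) / 512) * (ε * (G / 2)) ^ (p - 1) := by
    have h2 := (le_max_right (4 * Real.log (2 + 4)) (512 * l / (G / 2) ^ (p - 1))).trans hC.le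
    rw [div_le_iff₀ hGp] at h2
    rw [Real.mul_rpow hε.le (by linarith)]
    linarith
  have hgi : ∀ a b, IntervalIntegrable g volume a b := fun a b =>
    hg.continuous.intervalIntegrable a b
  refine aux_main p hp T (ε * (G / 2)) l hT (by positivity) hl1 hl4.ge hA u
    (fun y s => u y (projIcc 0 T hT0 s)) ?_ ?_ (fun x t => ε / 2 * (∫ y in (x - t)..(x + t), g y))
    ?_ ?_ h
  · refine hu.comp_continuous (f := fun q : ℝ × ℝ => (q.1, (projIcc 0 T hT0 q.2 : ℝ))) ?_ ?_
    · exact continuous_fst.prodMk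
        (continuous_subtype_val.comp (continuous_projIcc.comp continuous_snd))
    · intro q
      exact ⟨mem_univ _, (projIcc 0 T hT0 q.2).2⟩
  · intro y s hs
    rw [projIcc_of_mem hT0 hs]
  · intro x t ht
    have := intervalIntegral.integral_nonneg (μ := volume) (a := x - t) (b := x + t) (f := g)
      (by linarith) (fun y _ => hgpos y)
    positivity
  · intro x t ht hx h2
    rw [abs_le] at hx
    have : G ≤ ∫ y in (x - t)..(x + t), g y :=
      intervalIntegral.integral_mono_interval (by linarith) (by norm_num) (by linarith)
        (Eventually.of_forall hgpos) (hgi _ _)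
    nlinarith
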